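/- The subgroup Q of G generated by {i, j} has order 8, is isomorphic to the quaternion group Q₈, is a normal subgroup of G, and the quotient group G/Q is isomorphic to the symmetric group on 3 letters. -/

import Mathlib

open Matrix Complex
open scoped MatrixGroups

noncomputable section

def iM : Matrix (Fin 2) (Fin 2) ℂ := !![0, 1; -1, 0]
def jM : Matrix (Fin 2) (Fin 2) ℂ := !![0, Complex.I; Complex.I, 0]
def kM : Matrix (Fin 2) (Fin 2) ℂ := !![Complex.I, 0; 0, -Complex.I]
def wM : Matrix (Fin 2) (Fin 2) ℂ :=
  (1 / 2 : ℂ) • !![-1 + Complex.I, 1 + Complex.I; -1 + Complex.I, -1 - Complex.I]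
def cM : Matrix (Fin 2) (Fin 2) ℂ :=
  ((Real.sqrt 2 : ℂ))⁻¹ • !![-Complex.I, Complex.I; Complex.I, Complex.I]
def dM : Matrix (Fin 2) (Fin 2) ℂ :=
  ((Real.sqrt 2 : ℂ))⁻¹ • !![-1, 1; 1, 1]

def G : Subgroup (GL (Fin 2) ℂ) :=
  Subgroup.closure {g : GL (Fin 2) ℂ |
    (g : Matrix (Fin 2) (Fin 2) ℂ) = iM ∨
    (g : Matrix (Fin 2) (Fin 2) ℂ) = wM ∨
    (g : Matrix (Fin 2) (Fin 2) ℂ) = dM}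

def Q : Subgroup G :=
  Subgroup.closure {g : G |
    ((g : GL (Fin 2) ℂ) : Matrix (Fin 2) (Fin 2) ℂ) = iM ∨
    ((g : GL (Fin 2) ℂ) : Matrix (Fin 2) (Fin 2) ℂ) = jM}

/-- The proposition that the quotient of `Γ` by the normal subgroup `K`
is isomorphic to `Δ` as a group. -/
def QuotIsoTo {Γ : Type} [Group Γ] (K : Subgroup Γ) (hK : K.Normal)
    (Δ : Type) [Group Δ] : Prop := by
  letI := hK
  exact Nonempty ((Γ ⧸ K) ≃* Δ)

open QuaternionGroup DihedralGroup in
/-- A homomorphism out of `QuaternionGroup 2` from a pair satisfying the relations. -/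
theorem quat_hom {H : Type*} [Group H] (x y : H) (h4 : x ^ 4 = 1) (h2 : y * y = x ^ 2)
    (hc : x * y = y * x ^ 3) :
    ∃ f : QuaternionGroup 2 →* H, f (QuaternionGroup.a 1) = x ∧ f (QuaternionGroup.a 2) = x ^ 2 ∧
      f (QuaternionGroup.xa 0) = y := by
  let P : ZMod 4 → H := fun m => x ^ m.val
  have hadd : ∀ m n, P (m + n) = P m * P n := by
    intro m n
    simp only [P]
    rw [ZMod.val_add, ← pow_add]
    exact (pow_eq_pow_mod _ h4).symm
  have hcm : ∀ m, P m * y = y * P (-m) := by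
    have h1 : P 1 * y = y * P (-1) := by
      change x ^ 1 * y = y * x ^ 3
      rw [pow_one, hc]
    have h0 : P 0 * y = y * P (-0) := by
      change x ^ 0 * y = y * x ^ 0
      simp
    have hstep : ∀ m, P m * y = y * P (-m) → P (m + 1) * y = y * P (-(m + 1)) := by
      intro m hm
      rw [hadd, mul_assoc, h1, ← mul_assoc, hm, mul_assoc, ← hadd, neg_add]
    have hh1 := hstep 0 h0
    have hh2 := hstep _ hh1
    have hh3 := hstep _ hh2
    intro m
    fin_cases m
    · exact h0
    · exact hh1
    · exact hh2
    · exact hh3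
  have hyy : y * y = P 2 := h2
  let F : QuaternionGroup 2 → H := fun q => match q with
    | QuaternionGroup.a m => P m
    | QuaternionGroup.xa m => y * P m
  refine ⟨MonoidHom.mk' F ?_, ?_, ?_, ?_⟩
  · rintro (m | m) (n | n)
    · exact hadd m n
    · change y * P (n - m) = P m * (y * P n)
      rw [← mul_assoc, hcm, mul_assoc, ← hadd, neg_add_eq_sub]
    · change y * P (m + n) = y * P m * P n
      rw [hadd, mul_assoc]
    · change P (2 + n - m) = y * P m * (y * P n)
      rw [mul_assoc, ← mul_assoc (P m), hcm, mul_assoc, ← mul_assoc, hyy, ← hadd, ← hadd]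
      congr 1
      ring
  · change x ^ 1 = x
    simp
  · rfl
  · change y * x ^ 0 = y
    simp

/-- A homomorphism out of `DihedralGroup 3` from a pair satisfying the relations. -/
theorem dih_hom {H : Type*} [Group H] (x y : H) (h3 : x ^ 3 = 1) (h2 : y * y = 1)
    (hc : x * y = y * x ^ 2) (hx : x ≠ 1) (hy : y ≠ 1) :
    ∃ f : DihedralGroup 3 →* H, f (DihedralGroup.r 1) = x ∧
      f (DihedralGroup.sr 0) = y ∧ Function.Injective f := by
  let P : ZMod 3 → H := fun m => x ^ m.val
  have hadd : ∀ m n, P (m + n) = P m * P n := by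
    intro m n
    simp only [P]
    rw [ZMod.val_add, ← pow_add]
    exact (pow_eq_pow_mod _ h3).symm
  have hcm : ∀ m, P m * y = y * P (-m) := by
    have h1 : P 1 * y = y * P (-1) := by
      change x ^ 1 * y = y * x ^ 2
      rw [pow_one, hc]
    have h0 : P 0 * y = y * P (-0) := by
      change x ^ 0 * y = y * x ^ 0
      simp
    have hstep : ∀ m, P m * y = y * P (-m) → P (m + 1) * y = y * P (-(m + 1)) := by
      intro m hm
      rw [hadd, mul_assoc, h1, ← mul_assoc, hm, mul_assoc, ← hadd, neg_add]
    have hh1 := hstep 0 h0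
    have hh2 := hstep _ hh1
    intro m
    fin_cases m
    · exact h0
    · exact hh1
    · exact hh2
  let F : DihedralGroup 3 → H := fun q => match q with
    | DihedralGroup.r m => P m
    | DihedralGroup.sr m => y * P m
  have hF : ∀ p q, F (p * q) = F p * F q := by
    rintro (m | m) (n | n)
    · exact hadd m n
    · change y * P (n - m) = P m * (y * P n)
      rw [← mul_assoc, hcm, mul_assoc, ← hadd, neg_add_eq_sub]
    · change y * P (m + n) = y * P m * P n
      rw [hadd, mul_assoc]
    · change P (n - m) = y * P m * (y * P n)
      rw [mul_assoc, ← mul_assoc (P m), hcm, mul_assoc, ← mul_assoc, h2, ← hadd, one_mul]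
      congr 1
      ring
  have e1 : MonoidHom.mk' F hF (DihedralGroup.r 1) = x := by
    change x ^ 1 = x
    simp
  have e2 : MonoidHom.mk' F hF (DihedralGroup.sr 0) = y := by
    change y * x ^ 0 = y
    simp
  refine ⟨MonoidHom.mk' F hF, e1, e2, ?_⟩
  generalize MonoidHom.mk' F hF = f at e1 e2
  rw [injective_iff_map_eq_one]
  intro q hq
  have key : ∀ q : DihedralGroup 3, q = 1 ∨ q = DihedralGroup.r 1 ∨ q ^ 2 = DihedralGroup.r 1 ∨
      ∃ t, t * q * t⁻¹ = DihedralGroup.sr 0 := by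
    have h : ∀ m : ZMod 3, m = 0 ∨ m = 1 ∨ m + m = 1 := by decide
    have h' : ∀ m : ZMod 3, ∃ t : ZMod 3, m - t + -t = 0 := by decide
    rintro (m | m)
    · rcases h m with h | h | h
      · left; rw [h]; rfl
      · right; left; rw [h]
      · right; right; left; rw [sq, DihedralGroup.r_mul_r, h]
    · obtain ⟨t, ht⟩ := h' m
      right; right; right
      refine ⟨DihedralGroup.r t, ?_⟩
      rw [DihedralGroup.r_mul_sr, DihedralGroup.inv_r, DihedralGroup.sr_mul_r, ht]
  rcases key q with h | h | h | ⟨t, h⟩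
  · exact h
  · exact absurd (by rw [← e1, ← h, hq]) hx
  · exact absurd (by rw [← e1, ← h, map_pow, hq, one_pow]) hx
  · exact absurd (by rw [← e2, ← h]; simp [hq]) hy

theorem dih_perm : Nonempty (DihedralGroup 3 ≃* Equiv.Perm (Fin 3)) := by
  obtain ⟨f, -, -, hf⟩ := dih_hom (finRotate 3) (Equiv.swap (0 : Fin 3) 1) (by decide) (by decide)
    (by decide) (by decide) (by decide)
  refine ⟨MulEquiv.ofBijective f ((Fintype.bijective_iff_injective_and_card _).2 ⟨hf, ?_⟩)⟩
  rw [DihedralGroup.card, Fintype.card_perm]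
  rfl

theorem s_sq : ((Real.sqrt 2 : ℂ))⁻¹ * ((Real.sqrt 2 : ℂ))⁻¹ = 1 / 2 := by
  rw [← mul_inv, ← Complex.ofReal_mul, Real.mul_self_sqrt (by norm_num)]
  norm_num

theorem rel_i4 : iM ^ 4 = 1 := by
  simp [iM, pow_succ, Matrix.one_fin_two]

theorem rel_i2_ne : iM ^ 2 ≠ 1 := by
  intro h
  have := congrFun (congrFun h 0) 0
  simp [iM, pow_succ] at this
  norm_num [Complex.ext_iff] at this

theorem rel_jj : jM * jM = iM ^ 2 := by
  simp [iM, jM, pow_succ]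

theorem rel_ij : iM * jM = jM * iM ^ 3 := by
  simp [iM, jM, pow_succ]

theorem rel_w3 : wM ^ 3 = 1 := by
  ext a b
  fin_cases a <;> fin_cases b <;> simp [wM, pow_succ] <;> ring_nf <;>
    simp [Complex.I_sq, Complex.I_pow_three] <;> ring_nf

theorem rel_dd : dM * dM = 1 := by
  have h := s_sq
  unfold dM
  generalize ((Real.sqrt 2 : ℂ))⁻¹ = s at *
  ext a b
  fin_cases a <;> fin_cases b <;> simp <;> linear_combination 2 * h

theorem rel_wd : wM * dM = dM * wM ^ 2 := by
  have h := Complex.I_sq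
  unfold dM
  generalize ((Real.sqrt 2 : ℂ))⁻¹ = s at *
  ext a b
  fin_cases a <;> fin_cases b <;> simp [wM, pow_succ] <;> ring_nf <;> simp <;> ring_nf

theorem rel_wi : wM * iM = iM * jM * wM := by
  ext a b
  fin_cases a <;> fin_cases b <;> simp [wM, iM, jM] <;> ring_nf <;> simp <;> ring_nf

theorem rel_wj : wM * jM = iM * wM := by
  ext a b
  fin_cases a <;> fin_cases b <;> simp [wM, iM, jM] <;> ring_nf <;> simp <;> ring_nf

theorem rel_di : dM * iM = iM ^ 3 * dM := by
  ext a b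
  fin_cases a <;> fin_cases b <;> simp [dM, iM, pow_succ]

theorem rel_dj : dM * jM = jM * iM * dM := by
  ext a b
  fin_cases a <;> fin_cases b <;> simp [dM, iM, jM] <;> ring_nf

theorem det_d : dM.det = -1 := by
  have h := s_sq
  unfold dM
  generalize ((Real.sqrt 2 : ℂ))⁻¹ = s at *
  simp [Matrix.det_fin_two]
  linear_combination (-2) * h

theorem det_i : iM.det = 1 := by simp [iM, Matrix.det_fin_two]
theorem det_j : jM.det = 1 := by simp [jM, Matrix.det_fin_two]

/-- The abstract argument, for a group generated by `i, w, d`. -/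
theorem abstract_core {Γ : Type} [Group Γ] (i j w d : Γ) (K : Subgroup Γ)
    (hK : K = Subgroup.closure {i, j}) (htop : Subgroup.closure {i, w, d} = ⊤)
    (i4 : i ^ 4 = 1) (i2 : i ^ 2 ≠ 1) (jj : j * j = i ^ 2) (ij : i * j = j * i ^ 3)
    (w3 : w ^ 3 = 1) (w1 : w ≠ 1) (dd : d * d = 1) (wd : w * d = d * w ^ 2)
    (wi : w * i = i * j * w) (wj : w * j = i * w) (di : d * i = i ^ 3 * d)
    (dj : d * j = j * i * d) (hd : d ∉ K) :
    Nat.card K = 8 ∧ Nonempty (K ≃* QuaternionGroup 2) ∧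
      ∃ hQ : K.Normal, QuotIsoTo K hQ (Equiv.Perm (Fin 3)) := by
  have hi : i ∈ K := hK ▸ Subgroup.subset_closure (by simp)
  have hj : j ∈ K := hK ▸ Subgroup.subset_closure (by simp)
  obtain ⟨f, f1, f2, f3⟩ := quat_hom i j i4 jj ij
  have finj : Function.Injective f := by
    rw [injective_iff_map_eq_one]
    intro q hq
    have key : ∀ q : QuaternionGroup 2, q = 1 ∨ q = QuaternionGroup.a 2 ∨
        q * q = QuaternionGroup.a 2 := by
      have h : ∀ m : ZMod 4, m = 0 ∨ m = 2 ∨ m + m = 2 := by decide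
      rintro (m | m)
      · rcases h m with h | h | h
        · left; rw [h]; rfl
        · right; left; rw [h]
        · right; right
          rw [QuaternionGroup.a_mul_a]
          exact congrArg _ h
      · right; right
        rw [QuaternionGroup.xa_mul_xa]
        simp
    rcases key q with h | h | h
    · exact h
    · exact absurd (by rw [← f2, ← h, hq]) i2
    · exact absurd (by rw [← f2, ← h, map_mul, hq, one_mul]) i2
  have frange : f.range = K := by
    apply le_antisymm
    · have key : ∀ m : ZMod 4, ∃ n : ℕ, m = (n : ZMod (2 * 2)) := fun m =>
        ⟨m.val, (ZMod.natCast_zmod_val m).symm⟩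
      have ha : ∀ m, f (QuaternionGroup.a m) ∈ K := by
        intro m
        obtain ⟨n, rfl⟩ := key m
        rw [← QuaternionGroup.a_one_pow, map_pow, f1]
        exact K.pow_mem hi n
      rintro _ ⟨(m | m), rfl⟩
      · exact ha m
      · have : (QuaternionGroup.xa m : QuaternionGroup 2)
            = QuaternionGroup.xa 0 * QuaternionGroup.a m := by simp
        rw [this, map_mul, f3]
        exact K.mul_mem hj (ha m)
    · rw [hK, Subgroup.closure_le]
      rintro _ (rfl | rfl)
      · exact ⟨_, f1⟩
      · exact ⟨_, f3⟩
  have e : Nonempty (QuaternionGroup 2 ≃* K) :=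
    ⟨(MonoidHom.ofInjective finj).trans (MulEquiv.subgroupCongr frange)⟩
  obtain ⟨e⟩ := e
  have hcard : Nat.card K = 8 := by
    rw [← Nat.card_congr e.toEquiv, Nat.card_eq_fintype_card, QuaternionGroup.card]
  have hw : w ∉ K := by
    intro hw
    have h8 : w ^ 8 = 1 := by
      have := pow_card_eq_one' (x := (⟨w, hw⟩ : K))
      rw [hcard] at this
      simpa using congrArg Subtype.val this
    apply w1
    have h9 : w ^ 9 = 1 := by
      rw [show 9 = 3 * 3 from rfl, pow_mul, w3, one_pow]
    rw [pow_succ, h8, one_mul] at h9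
    exact h9
  have hnorm : ∀ g : Γ, g * i * g⁻¹ ∈ K → g * j * g⁻¹ ∈ K → ∀ q ∈ K, g * q * g⁻¹ ∈ K := by
    intro g h1 h2
    have : K ≤ K.comap (MulAut.conj g).toMonoidHom := by
      conv_lhs => rw [hK]
      rw [Subgroup.closure_le]
      rintro _ (rfl | rfl)
      · simpa using h1
      · simpa using h2
    intro q hq
    simpa using this hq
  have hN : K.Normal := by
    rw [← Subgroup.normalizer_eq_top_iff, eq_top_iff, ← htop, Subgroup.closure_le]
    have hdinv : d⁻¹ = d := inv_eq_of_mul_eq_one_left dd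
    rintro _ (rfl | rfl | rfl)
    · exact Subgroup.le_normalizer hi
    · rw [SetLike.mem_coe, Subgroup.mem_normalizer_iff]
      intro q
      have a1 := hnorm _ (by rw [wi]; simpa using K.mul_mem hi hj) (by rw [wj]; simpa using hi)
      refine ⟨a1 q, fun h => ?_⟩
      have := a1 _ (a1 _ h)
      convert this using 1
      calc q = _ ^ 3 * q * (_ ^ 3)⁻¹ := by rw [w3]; simp
        _ = _ := by simp only [pow_succ, pow_zero]; group
    · rw [SetLike.mem_coe, Subgroup.mem_normalizer_iff]
      intro q
      have a1 := hnorm _ (by rw [di]; simpa using K.pow_mem hi 3)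
        (by rw [dj]; simpa using K.mul_mem hj hi)
      refine ⟨a1 q, fun h => ?_⟩
      have := a1 _ h
      convert this using 1
      calc q = (_ * _) * q * (_ * _)⁻¹ := by rw [dd]; simp
        _ = _ := by group
  refine ⟨hcard, ⟨e.symm⟩, hN, ?_⟩
  change Nonempty ((Γ ⧸ K) ≃* _)
  obtain ⟨g, g1, g2, ginj⟩ := dih_hom (QuotientGroup.mk' K w) (QuotientGroup.mk' K d)
    (by rw [← map_pow, w3, map_one]) (by rw [← map_mul, dd, map_one])
    (by rw [← map_mul, wd, map_mul, map_pow])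
    (by simpa using hw) (by simpa using hd)
  have gsurj : Function.Surjective g := by
    have : (⊤ : Subgroup Γ) ≤ g.range.comap (QuotientGroup.mk' K) := by
      rw [← htop, Subgroup.closure_le]
      rintro _ (rfl | rfl | rfl)
      · refine ⟨1, ?_⟩
        rw [map_one]
        symm
        simpa using hi
      · exact ⟨_, g1⟩
      · exact ⟨_, g2⟩
    intro x
    obtain ⟨y, rfl⟩ := QuotientGroup.mk'_surjective K x
    exact this (Subgroup.mem_top y)
  obtain ⟨p⟩ := dih_perm
  exact ⟨(MulEquiv.ofBijective g ⟨ginj, gsurj⟩).symm.trans p⟩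

theorem quaternion_normal_subgroup :
    Nat.card Q = 8 ∧
    Nonempty (Q ≃* QuaternionGroup 2) ∧
    ∃ hQ : Q.Normal, QuotIsoTo Q hQ (Equiv.Perm (Fin 3)) := by
  have ei : ∃ g : GL (Fin 2) ℂ, (g : Matrix (Fin 2) (Fin 2) ℂ) = iM :=
    ⟨⟨iM, iM ^ 3, by rw [← pow_succ', rel_i4], by rw [← pow_succ, rel_i4]⟩, rfl⟩
  have ew : ∃ g : GL (Fin 2) ℂ, (g : Matrix (Fin 2) (Fin 2) ℂ) = wM :=
    ⟨⟨wM, wM ^ 2, by rw [← pow_succ', rel_w3], by rw [← pow_succ, rel_w3]⟩, rfl⟩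
  have ed : ∃ g : GL (Fin 2) ℂ, (g : Matrix (Fin 2) (Fin 2) ℂ) = dM :=
    ⟨⟨dM, dM, rel_dd, rel_dd⟩, rfl⟩
  obtain ⟨gi, hgi⟩ := ei
  obtain ⟨gw, hgw⟩ := ew
  obtain ⟨gd, hgd⟩ := ed
  have mi : gi ∈ G := Subgroup.subset_closure (Or.inl hgi)
  have mw : gw ∈ G := Subgroup.subset_closure (Or.inr (Or.inl hgw))
  have md : gd ∈ G := Subgroup.subset_closure (Or.inr (Or.inr hgd))
  have hgj : ((gw⁻¹ * gi * gw : GL (Fin 2) ℂ) : Matrix (Fin 2) (Fin 2) ℂ) = jM := by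
    rw [mul_assoc, Units.val_mul, Units.val_mul, hgi, hgw, ← rel_wj, ← hgw, Units.inv_mul_cancel_left]
  obtain ⟨gj, mj, hgj⟩ : ∃ g : GL (Fin 2) ℂ, g ∈ G ∧ (g : Matrix (Fin 2) (Fin 2) ℂ) = jM :=
    ⟨_, G.mul_mem (G.mul_mem (G.inv_mem mw) mi) mw, hgj⟩
  have hext : ∀ a b : G, ((a : GL (Fin 2) ℂ) : Matrix (Fin 2) (Fin 2) ℂ) =
      ((b : GL (Fin 2) ℂ) : Matrix (Fin 2) (Fin 2) ℂ) → a = b :=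
    fun a b h => Subtype.ext (Units.ext h)
  have hQ : Q = Subgroup.closure {(⟨gi, mi⟩ : G), ⟨gj, mj⟩} := by
    unfold Q
    congr 1
    ext g
    simp only [Set.mem_setOf_eq, Set.mem_insert_iff, Set.mem_singleton_iff]
    rw [← hgi, ← hgj]
    constructor
    · rintro (h | h)
      · exact Or.inl (hext _ _ h)
      · exact Or.inr (hext _ _ h)
    · rintro (h | h)
      · exact Or.inl (by rw [h])
      · exact Or.inr (by rw [h])
  have htop : Subgroup.closure {(⟨gi, mi⟩ : G), ⟨gw, mw⟩, ⟨gd, md⟩} = ⊤ := by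
    rw [eq_top_iff]
    refine (Subgroup.closure_closure_coe_preimage (k := {g : GL (Fin 2) ℂ |
      (g : Matrix (Fin 2) (Fin 2) ℂ) = iM ∨
      (g : Matrix (Fin 2) (Fin 2) ℂ) = wM ∨
      (g : Matrix (Fin 2) (Fin 2) ℂ) = dM})).symm.le.trans ?_
    apply Subgroup.closure_mono
    intro g hg
    rcases hg with h | h | h
    · exact Or.inl (hext _ _ (h.trans hgi.symm))
    · exact Or.inr (Or.inl (hext _ _ (h.trans hgw.symm)))
    · exact Or.inr (Or.inr (hext _ _ (h.trans hgd.symm)))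
  refine abstract_core (⟨gi, mi⟩ : G) ⟨gj, mj⟩ ⟨gw, mw⟩ ⟨gd, md⟩ Q hQ htop
    ?_ ?_ ?_ ?_ ?_ ?_ ?_ ?_ ?_ ?_ ?_ ?_ ?_
  · apply hext; simpa [hgi] using rel_i4
  · intro h
    apply rel_i2_ne
    have := congrArg (fun a : G => ((a : GL (Fin 2) ℂ) : Matrix (Fin 2) (Fin 2) ℂ)) h
    simpa [hgi] using this
  · apply hext; simpa [hgi, hgj] using rel_jj
  · apply hext; simpa [hgi, hgj] using rel_ij
  · apply hext; simpa [hgw] using rel_w3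
  · intro h
    have h1 := congrArg (fun a : G => ((a : GL (Fin 2) ℂ) : Matrix (Fin 2) (Fin 2) ℂ)) h
    simp only [hgw] at h1
    have h2 := congrFun (congrFun h1 0) 0
    simp [wM] at h2
    have h3 := congrArg Complex.re h2
    norm_num at h3
  · apply hext; simpa [hgd] using rel_dd
  · apply hext; simpa [hgd, hgw] using rel_wd
  · apply hext; simpa [hgi, hgj, hgw] using rel_wi
  · apply hext; simpa [hgi, hgj, hgw] using rel_wj
  · apply hext; simpa [hgi, hgd] using rel_di
  · apply hext; simpa [hgi, hgj, hgd] using rel_dj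
  · intro hd
    have hle : Q ≤ (Matrix.GeneralLinearGroup.det.comp G.subtype).ker := by
      rw [hQ, Subgroup.closure_le]
      rintro _ (rfl | rfl)
      · rw [SetLike.mem_coe, MonoidHom.mem_ker]
        apply Units.ext
        simp [hgi, det_i]
      · rw [SetLike.mem_coe, MonoidHom.mem_ker]
        apply Units.ext
        simp [hgj, det_j]
    have h := hle hd
    rw [MonoidHom.mem_ker] at h
    have h1 := congrArg Units.val h
    simp [hgd, det_d] at h1
    have h3 := congrArg Complex.re h1
    norm_num at h3
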